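/- Let k ≥ 2 be an integer and let m, n be nonnegative integers. Let T : ℕ → ℕ → ℝ be any function satisfying T(1, m) = 0 for all m ≥ 0, T(k', 0) = 1 for all k' ≥ 2, and for all k' ≥ 2 and m' ≥ 1 the recurrence T(k', m') − T(k', m' − 1) = ((k'(k' − 2))^{m'} · ((k' − 1)/2)_{m'}) / ((k' − 1)^{2m'} · (k'/2)_{m'}) · T(k' − 1, m'). Then ∫_{[0,∞)^k} (e₂(x))^m (e₁(x))^n e^{−e₁(x)} dx = (m! · (2m + n + k − 1)! · (k/2)_m / (2m + k − 1)!) · (2(k − 1)/k)^m · T(k, m). -/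

import Mathlib

open MeasureTheory Finset

/-- `e₁(x) = ∑ᵢ xᵢ` -/
noncomputable def e1 {k : ℕ} (x : Fin k → ℝ) : ℝ := ∑ i, x i

/-- `e₂(x) = ∑_{i<j} xᵢ xⱼ` -/
noncomputable def e2 {k : ℕ} (x : Fin k → ℝ) : ℝ := ∑ i, ∑ j ∈ Finset.Ioi i, x i * x j

/-- Pochhammer symbol `(y)ₘ = ∏_{i=0}^{m-1} (y + i)` -/
noncomputable def poch (y : ℝ) (m : ℕ) : ℝ := ∏ i ∈ Finset.range m, (y + i)

/-!
For a polynomial `p`, the integral of `p(x) e^{-e₁(x)}` over the positive orthant is the expectation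
of `p` at independent standard exponential variables, the linear functional sending the monomial
`x^a` to `∏ᵢ aᵢ!`. Integration by parts in each variable, summed over the variables, becomes two
algebraic identities: multiplying a homogeneous polynomial of degree `d` by `e₁` multiplies its
expectation by `d + k` (Euler's identity), and the expectation of `e₂^(m+1)` in `k` variables
differs from that in `k - 1` variables by a multiple of that of `e₂^m e₁`. Together they give a
recurrence in `k` and `m` for the expectation of `e₂^m`, which after normalization is the one
defining `T`.
-/

section Esymm

open MvPolynomial

variable {σ R : Type*} [CommSemiring R]

lemma multiset_esymm_zero_cons (s : Multiset R) (r : ℕ) : (0 ::ₘ s).esymm r = s.esymm r := by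
  cases r with
  | zero => simp [Multiset.esymm]
  | succ r => simp [Multiset.esymm, Multiset.powersetCard_cons]

lemma aeval_insertNth_zero_esymm {k : ℕ} (i : Fin (k + 1)) (r : ℕ) :
    aeval (i.insertNth 0 X : Fin (k + 1) → MvPolynomial (Fin k) R) (esymm (Fin (k + 1)) R r) =
      esymm (Fin k) R r := by
  rw [aeval_esymm_eq_multiset_esymm, Fin.univ_succAbove k i, cons_val, Multiset.map_cons,
    Fin.insertNth_apply_same, multiset_esymm_zero_cons, map_val, Multiset.map_map,
    esymm_eq_multiset_esymm]
  simp only [Function.comp_def, Fin.coe_succAboveEmb, Fin.insertNth_apply_succAbove]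

lemma esymm_eq_zero_of_card_lt [Fintype σ] {r : ℕ} (h : Fintype.card σ < r) :
    esymm σ R r = 0 := by
  rw [esymm, powersetCard_eq_empty.2 (by simpa using h), sum_empty]

lemma isHomogeneous_esymm [Fintype σ] (r : ℕ) : (esymm σ R r).IsHomogeneous r := by
  refine IsHomogeneous.sum _ _ _ fun s hs => ?_
  simpa [mem_powersetCard_univ.1 hs] using
    IsHomogeneous.prod s (fun i => X i) (fun _ => 1) fun i _ => isHomogeneous_X R i

lemma pderiv_prod_X [DecidableEq σ] (i : σ) (s : Finset σ) :
    pderiv i (∏ j ∈ s, X j : MvPolynomial σ R) =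
      if i ∈ s then ∏ j ∈ s.erase i, X j else 0 := by
  have hvanish (t : Finset σ) (ht : i ∉ t) : pderiv i (∏ j ∈ t, X j : MvPolynomial σ R) = 0 := by
    induction t using Finset.cons_induction with
    | empty => simp
    | cons a t ha ih =>
      obtain ⟨hia, hit⟩ : i ≠ a ∧ i ∉ t := by simpa using ht
      rw [prod_cons, pderiv_mul, pderiv_X_of_ne hia.symm, ih hit, zero_mul, mul_zero, add_zero]
  split_ifs with hi
  · rw [← mul_prod_erase s _ hi, pderiv_mul, hvanish _ (notMem_erase i s), pderiv_X_self]
    ring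
  · exact hvanish s hi

lemma sum_powersetCard_succ_sum_erase {M : Type*} [AddCommMonoid M] [Fintype σ] [DecidableEq σ]
    (r : ℕ) (f : Finset σ → M) :
    ∑ s ∈ powersetCard (r + 1) univ, ∑ i ∈ s, f (s.erase i) =
      (Fintype.card σ - r) • ∑ t ∈ powersetCard r univ, f t := by
  have hbij : ∑ s ∈ powersetCard (r + 1) univ, ∑ i ∈ s, f (s.erase i) =
      ∑ t ∈ powersetCard r univ, ∑ _i ∈ tᶜ, f t := by
    rw [sum_sigma', sum_sigma']
    refine sum_nbij' (fun p => ⟨p.1.erase p.2, p.2⟩) (fun p => ⟨insert p.2 p.1, p.2⟩)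
      ?_ ?_ ?_ ?_ fun _ _ => rfl
    all_goals simp +contextual [mem_sigma]
  rw [hbij, smul_sum]
  refine sum_congr rfl fun t ht => ?_
  rw [sum_const, card_compl, mem_powersetCard_univ.1 ht]

lemma sum_pderiv_esymm_succ [Fintype σ] (r : ℕ) :
    ∑ i, pderiv i (esymm σ R (r + 1)) = (Fintype.card σ - r) • esymm σ R r := by
  classical
  simp only [esymm, map_sum, pderiv_prod_X]
  rw [sum_comm, ← sum_powersetCard_succ_sum_erase]
  simp

lemma esymm_two [Fintype σ] [LinearOrder σ] [LocallyFiniteOrderTop σ] :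
    esymm σ R 2 = ∑ i, ∑ j ∈ Ioi i, X i * X j := by
  rw [sum_sigma', esymm]
  refine (sum_bij (fun p _ => {p.1, p.2}) ?_ ?_ ?_ ?_).symm
  · rintro ⟨i, j⟩ hij
    exact mem_powersetCard_univ.2 (card_pair (by simpa using (mem_Ioi.1 (mem_sigma.1 hij).2).ne))
  · rintro ⟨i, j⟩ hij ⟨i', j'⟩ hij' h
    simp only [mem_sigma, mem_univ, true_and, mem_Ioi] at hij hij'
    have hmem (l : σ) : l = i ∨ l = j ↔ l = i' ∨ l = j' := by simpa using Finset.ext_iff.1 h l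
    have hi := (hmem i).1 (.inl rfl)
    have hj := (hmem j).1 (.inr rfl)
    rcases hi with rfl | rfl
    · rcases hj with rfl | rfl
      · exact absurd hij (lt_irrefl _)
      · rfl
    · rcases hj with rfl | rfl
      · exact absurd hij (lt_asymm hij')
      · exact absurd hij (lt_irrefl _)
  · intro s hs
    obtain ⟨i, j, hij, rfl⟩ := card_eq_two.1 (mem_powersetCard_univ.1 hs)
    rcases hij.lt_or_gt with h | h
    · exact ⟨⟨i, j⟩, by simpa using h, rfl⟩
    · exact ⟨⟨j, i⟩, by simpa using h, pair_comm j i⟩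
  · rintro ⟨i, j⟩ hij
    exact (prod_pair (by simpa using (mem_Ioi.1 (mem_sigma.1 hij).2).ne)).symm

end Esymm

section ExpMoment

open MvPolynomial

variable (σ R : Type*) [Fintype σ] [CommSemiring R]

/-- The expectation of a polynomial at independent standard exponential variables, defined over any
commutative semiring through the moments `E[x^a] = ∏ᵢ aᵢ!`. It turns the integrals of
`p(x) e^{-∑ xᵢ}` over the positive orthant into algebra. -/
noncomputable def expMoment : MvPolynomial σ R →ₗ[R] R :=
  (basisMonomials σ R).constr R fun a => ∏ i, ((a i).factorial : R)

variable {σ R}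

lemma expMoment_monomial (a : σ →₀ ℕ) (c : R) :
    expMoment σ R (monomial a c) = c * ∏ i, ((a i).factorial : R) := by
  have h : monomial a c = c • basisMonomials σ R a := by simp [smul_monomial]
  rw [h, map_smul, expMoment, Module.Basis.constr_basis, smul_eq_mul]

lemma expMoment_one : expMoment σ R 1 = 1 := by
  simpa using expMoment_monomial (0 : σ →₀ ℕ) (1 : R)

lemma prod_factorial_single_add (i : σ) (a : σ →₀ ℕ) :
    ∏ j, (((Finsupp.single i 1 + a : σ →₀ ℕ) j).factorial : R) =
      (a i + 1) * ∏ j, ((a j).factorial : R) := by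
  classical
  rw [← mul_prod_erase univ _ (mem_univ i),
    ← mul_prod_erase univ (fun j => ((a j).factorial : R)) (mem_univ i), ← mul_assoc]
  congr 1
  · simp [add_comm 1, Nat.factorial_succ]
  · refine prod_congr rfl fun j hj => ?_
    simp [(ne_of_mem_erase hj).symm]

lemma expMoment_X_mul (i : σ) (p : MvPolynomial σ R) :
    expMoment σ R (X i * p) = expMoment σ R p + expMoment σ R (X i * pderiv i p) := by
  induction p using MvPolynomial.induction_on' with
  | monomial a c =>
    rw [X_mul_pderiv_monomial, map_nsmul, X, monomial_mul, expMoment_monomial, expMoment_monomial,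
      prod_factorial_single_add, nsmul_eq_mul]
    ring
  | add p q hp hq =>
    simp only [map_add, mul_add, hp, hq]
    ring

lemma expMoment_esymm_one_mul {p : MvPolynomial σ R} {d : ℕ} (hp : p.IsHomogeneous d) :
    expMoment σ R (esymm σ R 1 * p) = ((d + Fintype.card σ : ℕ) : R) * expMoment σ R p := by
  calc expMoment σ R (esymm σ R 1 * p)
      = ∑ i, expMoment σ R (X i * p) := by rw [esymm_one, sum_mul, map_sum]
    _ = Fintype.card σ • expMoment σ R p + expMoment σ R (∑ i, X i * pderiv i p) := by
        simp only [expMoment_X_mul _ p, sum_add_distrib, sum_const, card_univ, map_sum]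
    _ = ((d + Fintype.card σ : ℕ) : R) * expMoment σ R p := by
        rw [hp.sum_X_mul_pderiv, map_nsmul, nsmul_eq_mul, nsmul_eq_mul]
        push_cast
        ring

lemma expMoment_mul_esymm_one_pow {p : MvPolynomial σ R} {d : ℕ} (hp : p.IsHomogeneous d) (n : ℕ) :
    expMoment σ R (p * esymm σ R 1 ^ n) =
      ((d + Fintype.card σ).ascFactorial n : R) * expMoment σ R p := by
  induction n with
  | zero => simp
  | succ n ih =>
    have hdeg : (p * esymm σ R 1 ^ n).IsHomogeneous (d + n) := by
      simpa using hp.mul ((isHomogeneous_esymm (σ := σ) (R := R) 1).pow n)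
    rw [pow_succ', mul_left_comm, expMoment_esymm_one_mul hdeg, ih, Nat.ascFactorial_succ]
    push_cast
    ring

lemma aeval_insertNth_zero_monomial {k : ℕ} (i : Fin (k + 1)) (a : Fin (k + 1) →₀ ℕ) (c : R) :
    aeval (i.insertNth 0 X : Fin (k + 1) → MvPolynomial (Fin k) R) (monomial a c) =
      0 ^ a i * monomial (Finsupp.equivFunOnFinite.symm fun j => a (i.succAbove j)) c := by
  rw [aeval_monomial, monomial_eq, Finsupp.prod_fintype _ _ (by simp),
    Finsupp.prod_fintype _ _ (by simp), Fin.prod_univ_succAbove _ i, algebraMap_eq,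
    mul_left_comm]
  simp only [Fin.insertNth_apply_same, Fin.insertNth_apply_succAbove,
    Finsupp.equivFunOnFinite_symm_apply_apply]

-- Integration by parts in the `i`-th variable; the last term is the boundary term at `xᵢ = 0`.
lemma expMoment_eq_pderiv_add {k : ℕ} (i : Fin (k + 1)) (p : MvPolynomial (Fin (k + 1)) R) :
    expMoment (Fin (k + 1)) R p = expMoment (Fin (k + 1)) R (pderiv i p) +
      expMoment (Fin k) R (aeval (i.insertNth 0 X) p) := by
  induction p using MvPolynomial.induction_on' with
  | monomial a c =>
    rw [aeval_insertNth_zero_monomial]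
    by_cases h : a i = 0
    · simp [h, expMoment_monomial, Fin.prod_univ_succAbove _ i]
    · obtain ⟨b, rfl⟩ : ∃ b, a = Finsupp.single i 1 + b :=
        ⟨a - Finsupp.single i 1,
          (add_tsub_cancel_of_le (by simpa [Nat.one_le_iff_ne_zero] using h)).symm⟩
      rw [zero_pow h, zero_mul, map_zero, add_zero, pderiv_monomial, add_tsub_cancel_left,
        expMoment_monomial, expMoment_monomial, prod_factorial_single_add, mul_assoc]
      simp [add_comm]
  | add p q hp hq =>
    simp only [map_add]
    rw [hp, hq]
    ring

lemma card_mul_expMoment_esymm_succ_pow_succ (k r m : ℕ) :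
    ((k + 1 : ℕ) : R) * expMoment (Fin (k + 1)) R (esymm (Fin (k + 1)) R (r + 1) ^ (m + 1)) =
      ((k + 1 : ℕ) : R) * expMoment (Fin k) R (esymm (Fin k) R (r + 1) ^ (m + 1)) +
        (((m + 1) * (k + 1 - r) : ℕ) : R) * expMoment (Fin (k + 1)) R
          (esymm (Fin (k + 1)) R r * esymm (Fin (k + 1)) R (r + 1) ^ m) := by
  set p : MvPolynomial (Fin (k + 1)) R := esymm (Fin (k + 1)) R (r + 1) ^ (m + 1) with hp
  have hderiv : ∑ i, pderiv i p = ((m + 1) * (k + 1 - r)) •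
      (esymm (Fin (k + 1)) R r * esymm (Fin (k + 1)) R (r + 1) ^ m) := by
    simp only [hp, pderiv_pow, ← mul_sum, sum_pderiv_esymm_succ, Fintype.card_fin, nsmul_eq_mul,
      Nat.add_sub_cancel]
    push_cast
    ring
  have hboundary (i : Fin (k + 1)) :
      aeval (i.insertNth 0 X : Fin (k + 1) → MvPolynomial (Fin k) R) p =
        esymm (Fin k) R (r + 1) ^ (m + 1) := by
    rw [hp, map_pow, aeval_insertNth_zero_esymm]
  calc ((k + 1 : ℕ) : R) * expMoment (Fin (k + 1)) R p
      = ∑ _i : Fin (k + 1), expMoment (Fin (k + 1)) R p := by simp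
    _ = ∑ i, (expMoment (Fin (k + 1)) R (pderiv i p) +
          expMoment (Fin k) R (esymm (Fin k) R (r + 1) ^ (m + 1))) :=
        sum_congr rfl fun i _ => by rw [expMoment_eq_pderiv_add i p, hboundary]
    _ = _ := by
        rw [sum_add_distrib, ← map_sum, hderiv, map_nsmul, sum_const, card_univ, Fintype.card_fin,
          nsmul_eq_mul, nsmul_eq_mul, add_comm]

lemma card_mul_expMoment_esymm_two_pow_succ (k m : ℕ) :
    ((k + 1 : ℕ) : R) * expMoment (Fin (k + 1)) R (esymm (Fin (k + 1)) R 2 ^ (m + 1)) =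
      ((k + 1 : ℕ) : R) * expMoment (Fin k) R (esymm (Fin k) R 2 ^ (m + 1)) +
        (((m + 1) * k * (2 * m + k + 1) : ℕ) : R) *
          expMoment (Fin (k + 1)) R (esymm (Fin (k + 1)) R 2 ^ m) := by
  rw [card_mul_expMoment_esymm_succ_pow_succ k 1 m,
    expMoment_esymm_one_mul ((isHomogeneous_esymm 2).pow m), Fintype.card_fin, Nat.add_sub_cancel]
  push_cast
  ring

end ExpMoment

section Integral

open MvPolynomial

lemma integrableOn_pow_mul_exp_neg_Ici (n : ℕ) :
    IntegrableOn (fun x : ℝ => x ^ n * Real.exp (-x)) (Set.Ici 0) := by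
  rw [integrableOn_Ici_iff_integrableOn_Ioi]
  refine (Real.GammaIntegral_convergent (s := n + 1) (by positivity)).congr_fun (fun x _ => ?_)
    measurableSet_Ioi
  simp [mul_comm]

lemma integral_pow_mul_exp_neg_Ici (n : ℕ) :
    ∫ x : ℝ in Set.Ici 0, x ^ n * Real.exp (-x) = n.factorial := by
  rw [integral_Ici_eq_integral_Ioi, ← Real.Gamma_nat_eq_factorial,
    Real.Gamma_eq_integral (by positivity)]
  refine setIntegral_congr_fun measurableSet_Ioi fun x _ => ?_
  simp [mul_comm]

variable {ι : Type*} [Fintype ι]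

lemma eval_monomial_mul_exp_neg_sum (a : ι →₀ ℕ) (c : ℝ) (x : ι → ℝ) :
    eval x (monomial a c) * Real.exp (-∑ i, x i) = c * ∏ i, (x i ^ a i * Real.exp (-x i)) := by
  rw [eval_monomial, ← sum_neg_distrib, Real.exp_sum, prod_mul_distrib,
    Finsupp.prod_fintype _ _ (by simp), mul_assoc]

lemma integrableOn_eval_mul_exp_neg_sum (p : MvPolynomial ι ℝ) :
    IntegrableOn (fun x : ι → ℝ => eval x p * Real.exp (-∑ i, x i))
      (Set.univ.pi fun _ => Set.Ici 0) := by
  induction p using MvPolynomial.induction_on' with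
  | monomial a c =>
    simp only [eval_monomial_mul_exp_neg_sum]
    rw [IntegrableOn, volume_pi, Measure.restrict_pi_pi]
    exact (Integrable.fintype_prod fun i => integrableOn_pow_mul_exp_neg_Ici (a i)).const_mul c
  | add p q hp hq =>
    simp only [map_add, add_mul]
    exact hp.add hq

lemma integral_eval_mul_exp_neg_sum (p : MvPolynomial ι ℝ) :
    ∫ x : ι → ℝ in Set.univ.pi fun _ => Set.Ici 0,
      eval x p * Real.exp (-∑ i, x i) = expMoment ι ℝ p := by
  induction p using MvPolynomial.induction_on' with
  | monomial a c =>
    simp only [eval_monomial_mul_exp_neg_sum]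
    rw [volume_pi, Measure.restrict_pi_pi, integral_const_mul,
      integral_fintype_prod_eq_prod fun i (t : ℝ) => t ^ a i * Real.exp (-t), expMoment_monomial]
    simp only [integral_pow_mul_exp_neg_Ici]
  | add p q hp hq =>
    simp only [map_add, add_mul]
    rw [integral_add (integrableOn_eval_mul_exp_neg_sum p) (integrableOn_eval_mul_exp_neg_sum q),
      hp, hq]

lemma eval_esymm_two {k : ℕ} (x : Fin k → ℝ) : eval x (esymm (Fin k) ℝ 2) = e2 x := by
  simp [esymm_two, e2]

lemma integral_e2_pow_mul_e1_pow_mul_exp_neg (k m n : ℕ) :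
    ∫ x : Fin k → ℝ in Set.univ.pi fun _ => Set.Ici (0 : ℝ),
        e2 x ^ m * e1 x ^ n * Real.exp (-(e1 x)) =
      ((2 * m + k).ascFactorial n : ℝ) * expMoment (Fin k) ℝ (esymm (Fin k) ℝ 2 ^ m) := by
  have h := integral_eval_mul_exp_neg_sum (esymm (Fin k) ℝ 2 ^ m * esymm (Fin k) ℝ 1 ^ n)
  simp only [map_mul, map_pow, eval_esymm_two, esymm_one, map_sum, eval_X] at h
  simp only [e1]
  rw [h, ← esymm_one, expMoment_mul_esymm_one_pow ((isHomogeneous_esymm 2).pow m), Fintype.card_fin]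

end Integral

section ClosedForm

open MvPolynomial

lemma poch_pos {y : ℝ} (hy : 0 < y) (m : ℕ) : 0 < poch y m :=
  prod_pos fun i _ => by positivity

lemma poch_succ (y : ℝ) (m : ℕ) : poch y (m + 1) = poch y m * (y + m) :=
  prod_range_succ _ m

/-- The factor relating `E[e₂^m]` in `k` independent standard exponential variables to
`T(k, m)`; this normalization turns the recurrence for `E[e₂^m]` into the one for `T`. -/
noncomputable def momentNorm (k m : ℕ) : ℝ :=
  m.factorial * poch ((k : ℝ) / 2) m * (2 * ((k : ℝ) - 1) / k) ^ m

lemma momentNorm_zero_right (k : ℕ) : momentNorm k 0 = 1 := by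
  simp [momentNorm, poch]

lemma momentNorm_succ_right (k m : ℕ) :
    ((k + 1 : ℕ) : ℝ) * momentNorm (k + 1) (m + 1) =
      (((m + 1) * k * (2 * m + k + 1) : ℕ) : ℝ) * momentNorm (k + 1) m := by
  simp only [momentNorm, poch_succ, Nat.factorial_succ, pow_succ]
  push_cast
  field_simp
  ring

lemma momentNorm_mul_ratio (k m : ℕ) :
    momentNorm (k + 2) m * ((((k + 2) * k : ℕ) : ℝ) ^ m * poch (((k + 1 : ℕ) : ℝ) / 2) m /
        (((k + 1 : ℕ) : ℝ) ^ (2 * m) * poch (((k + 2 : ℕ) : ℝ) / 2) m)) =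
      momentNorm (k + 1) m := by
  have hpoch : poch (((k + 2 : ℕ) : ℝ) / 2) m ≠ 0 := (poch_pos (by positivity) m).ne'
  have hbase : 2 * (((k + 2 : ℕ) : ℝ) - 1) / ((k + 2 : ℕ) : ℝ) * (((k + 2) * k : ℕ) : ℝ) /
      ((k + 1 : ℕ) : ℝ) ^ 2 = 2 * (((k + 1 : ℕ) : ℝ) - 1) / ((k + 1 : ℕ) : ℝ) := by
    push_cast
    field_simp
    ring
  rw [momentNorm, momentNorm, ← hbase, div_pow _ (((k + 1 : ℕ) : ℝ) ^ 2),
    mul_pow _ (((k + 2) * k : ℕ) : ℝ), ← pow_mul]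
  field_simp

lemma expMoment_esymm_two_pow (T : ℕ → ℕ → ℝ) (hT1 : ∀ m, T 1 m = 0)
    (hT0 : ∀ k, T (k + 2) 0 = 1)
    (hTrec : ∀ k m, momentNorm (k + 2) (m + 1) * (T (k + 2) (m + 1) - T (k + 2) m) =
      momentNorm (k + 1) (m + 1) * T (k + 1) (m + 1)) (k m : ℕ) :
    expMoment (Fin (k + 2)) ℝ (esymm (Fin (k + 2)) ℝ 2 ^ m) =
      momentNorm (k + 2) m * T (k + 2) m := by
  have column (k : ℕ)
      (hk : ∀ m, expMoment (Fin (k + 1)) ℝ (esymm (Fin (k + 1)) ℝ 2 ^ (m + 1)) =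
        momentNorm (k + 1) (m + 1) * T (k + 1) (m + 1)) (m : ℕ) :
      expMoment (Fin (k + 2)) ℝ (esymm (Fin (k + 2)) ℝ 2 ^ m) =
        momentNorm (k + 2) m * T (k + 2) m := by
    induction m with
    | zero => rw [pow_zero, expMoment_one, momentNorm_zero_right, hT0, one_mul]
    | succ m ih =>
      have hcard : ((k + 1 + 1 : ℕ) : ℝ) ≠ 0 := by positivity
      apply mul_left_cancel₀ hcard
      rw [card_mul_expMoment_esymm_two_pow_succ (k + 1), hk, ih]
      linear_combination
        -(((k + 1 + 1 : ℕ) : ℝ) * hTrec k m) - T (k + 2) m * momentNorm_succ_right (k + 1) m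
  induction k generalizing m with
  | zero =>
    refine column 0 (fun m => ?_) m
    rw [esymm_eq_zero_of_card_lt (by simp), zero_pow m.succ_ne_zero, map_zero, hT1, mul_zero]
  | succ k ih => exact column (k + 1) (fun m => ih (m + 1)) m

end ClosedForm

theorem stmt0 (k : ℕ) (hk : 2 ≤ k) (m n : ℕ) (T : ℕ → ℕ → ℝ)
    (hT1 : ∀ m' : ℕ, T 1 m' = 0)
    (hT0 : ∀ k' : ℕ, 2 ≤ k' → T k' 0 = 1)
    (hTrec : ∀ k' m' : ℕ, 2 ≤ k' → 1 ≤ m' →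
      T k' m' - T k' (m' - 1) =
        ((k' * (k' - 2) : ℕ) : ℝ) ^ m' * poch (((k' - 1 : ℕ) : ℝ) / 2) m' /
          (((k' - 1 : ℕ) : ℝ) ^ (2 * m') * poch ((k' : ℝ) / 2) m') * T (k' - 1) m') :
    ∫ x : Fin k → ℝ in Set.univ.pi fun _ => Set.Ici (0 : ℝ),
        e2 x ^ m * e1 x ^ n * Real.exp (-(e1 x)) =
      (m.factorial : ℝ) * ((2 * m + n + k - 1).factorial : ℝ) * poch ((k : ℝ) / 2) m /
          ((2 * m + k - 1).factorial : ℝ) *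
        (2 * ((k : ℝ) - 1) / k) ^ m * T k m := by
  obtain ⟨k, rfl⟩ : ∃ j, k = j + 2 := ⟨k - 2, by omega⟩
  have hT (j l : ℕ) : momentNorm (j + 2) (l + 1) * (T (j + 2) (l + 1) - T (j + 2) l) =
      momentNorm (j + 1) (l + 1) * T (j + 1) (l + 1) := by
    have h := hTrec (j + 2) (l + 1) (by omega) (by omega)
    rw [← momentNorm_mul_ratio j, mul_assoc]
    exact congrArg _ h
  have hfactorial : ((2 * m + k + 1).factorial : ℝ) * ((2 * m + (k + 2)).ascFactorial n : ℝ) =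
      ((2 * m + n + k + 1).factorial : ℝ) := by
    rw [show 2 * m + n + k + 1 = 2 * m + k + 1 + n by ring]
    exact_mod_cast Nat.factorial_mul_ascFactorial (2 * m + k + 1) n
  rw [integral_e2_pow_mul_e1_pow_mul_exp_neg,
    expMoment_esymm_two_pow T hT1 (fun j => hT0 (j + 2) (by omega)) hT, momentNorm,
    show 2 * m + n + (k + 2) - 1 = 2 * m + n + k + 1 by omega,
    show 2 * m + (k + 2) - 1 = 2 * m + k + 1 by omega, ← hfactorial]
  field_simp
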